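/- Let d be a partial metric on a nonempty set X whose associated metric space (X,e) is complete, let φ : [0,∞) → [0,∞) be limit normal with ψ(t) := t − φ(t) semi-coercive, and let T : X → X be (M;b;φ)-contractive, i.e., d(Tx,Ty) ≤ max{φ(M(x,y)), b(x,y)} for all x, y ∈ X. Set θ := inf{d(z,z) : z ∈ X, d(z,Tz) = d(z,z)}. Then for every ε > 0 there exists z ∈ X with d(z,Tz) = d(z,z), d(z,z) < θ + ε, and d(z,z) − d(Tz,Tz) < 2ε. -/

import Mathlib

open Filter Topology

noncomputable section

/-- A partial metric on `X` (Matthews). -/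
def IsPartialMetric {X : Type*} (d : X → X → ℝ) : Prop :=
  (∀ x y, 0 ≤ d x y) ∧
  (∀ x y, d x y = d y x) ∧
  (∀ x y, max (d x x) (d y y) ≤ d x y) ∧
  (∀ x y z, d x z ≤ d x y + d y z - d y y) ∧
  (∀ x y, d x y = d x x → d x y = d y y → x = y)

/-- The (standard) metric associated to a partial metric. -/
def assocE {X : Type*} (d : X → X → ℝ) (x y : X) : ℝ :=
  2 * d x y - d x x - d y y

/-- Completeness of the associated metric space `(X, e)`:
every `e`-Cauchy sequence `e`-converges to some point. -/
def eComplete {X : Type*} (d : X → X → ℝ) : Prop :=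
  ∀ u : ℕ → X,
    (∀ α : ℝ, 0 < α → ∃ p : ℕ, ∀ m n : ℕ, p ≤ m → p ≤ n → assocE d (u m) (u n) < α) →
    ∃ x : X, Tendsto (fun n => assocE d (u n) x) atTop (nhds 0)

/-- `M(x,y) = max{d(x,y), d(x,Tx), d(y,Ty), (1/2)(d(x,Ty)+d(Tx,y))}`. -/
def Mfun {X : Type*} (d : X → X → ℝ) (T : X → X) (x y : X) : ℝ :=
  max (max (d x y) (max (d x (T x)) (d y (T y)))) ((d x (T y) + d (T x) y) / 2)

/-- A normal function `φ : [0,∞) → [0,∞)`. -/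
def IsNormal (φ : ℝ → ℝ) : Prop :=
  (∀ t, 0 ≤ t → 0 ≤ φ t) ∧ φ 0 = 0 ∧ ∀ t, 0 < t → φ t < t

/-- `limsup_{t→s⁺} φ(t) = inf_{ε>0} sup {φ(t) : s ≤ t < s+ε}`. -/
def rightLimsup (φ : ℝ → ℝ) (s : ℝ) : ℝ :=
  sInf {y : ℝ | ∃ ε : ℝ, 0 < ε ∧ y = sSup (φ '' Set.Ico s (s + ε))}

/-- `limsup_{t→s} φ(t) = inf_{ε>0} sup {φ(t) : t ∈ [0,∞), s-ε < t < s+ε}`. -/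
def limsupAt (φ : ℝ → ℝ) (s : ℝ) : ℝ :=
  sInf {y : ℝ | ∃ ε : ℝ, 0 < ε ∧ y = sSup (φ '' (Set.Ioo (s - ε) (s + ε) ∩ Set.Ici 0))}

/-- A right limit normal function. -/
def IsRightLimitNormal (φ : ℝ → ℝ) : Prop :=
  IsNormal φ ∧ ∀ s : ℝ, 0 < s → rightLimsup φ s < s

/-- A limit normal function. -/
def IsLimitNormal (φ : ℝ → ℝ) : Prop :=
  IsNormal φ ∧ ∀ s : ℝ, 0 < s → limsupAt φ s < s

/-- `liminf_{t→∞} ψ(t) = sup_{α ≥ 0} inf {ψ(t) : t ≥ α}`, computed in `EReal`. -/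
def liminfAtInfty (ψ : ℝ → ℝ) : EReal :=
  ⨆ α : {a : ℝ // 0 ≤ a}, ⨅ t : {t : ℝ // (α : ℝ) ≤ t}, ((ψ t : ℝ) : EReal)

/-- `ψ` is semi-coercive: `liminf_{t→∞} ψ(t) > 0`. -/
def SemiCoercive (ψ : ℝ → ℝ) : Prop := 0 < liminfAtInfty ψ

theorem ln_aux {φ : ℝ → ℝ} (hφ : IsLimitNormal φ) {s : ℝ} (hs : 0 < s) :
    ∃ δ : ℝ, 0 < δ ∧ ∃ c : ℝ, c < s ∧ ∀ t, 0 ≤ t → s - δ < t → t < s + δ → φ t ≤ c := by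
  obtain ⟨⟨h0, h00, hlt⟩, hl⟩ := hφ
  have h := hl s hs
  unfold limsupAt at h
  obtain ⟨y, ⟨δ, hδ, rfl⟩, hy⟩ := exists_lt_of_csInf_lt (by exact ⟨_, 1, one_pos, rfl⟩) h
  refine ⟨δ, hδ, _, hy, fun t ht h1 h2 => le_csSup ?_ ⟨t, ⟨⟨h1, h2⟩, ht⟩, rfl⟩⟩
  refine ⟨s + δ, ?_⟩
  rintro _ ⟨t, ⟨⟨h1, h2⟩, ht⟩, rfl⟩
  rcases eq_or_lt_of_le (show (0:ℝ) ≤ t from ht) with h | h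
  · rw [← h, h00]; linarith
  · linarith [hlt t h]

theorem ev_aux {φ : ℝ → ℝ} (hφ : IsLimitNormal φ) {s : ℝ} (hs : 0 < s) {u v w : ℕ → ℝ}
    (hu0 : ∀ n, 0 ≤ u n) (hu : Tendsto u atTop (𝓝 s)) (hv : Tendsto v atTop (𝓝 s))
    (h : ∀ n, v n ≤ max (φ (u n)) (w n)) : ∀ᶠ n in atTop, v n ≤ w n := by
  obtain ⟨δ, hδ, c, hc, hφc⟩ := ln_aux hφ hs
  filter_upwards [hu.eventually (lt_mem_nhds (show s - δ < s by linarith)),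
    hu.eventually (gt_mem_nhds (show s < s + δ by linarith)),
    hv.eventually (lt_mem_nhds hc)] with n h1 h2 h3
  rcases le_max_iff.1 (h n) with h4 | h4
  · linarith [hφc _ (hu0 n) h1 h2]
  · exact h4

theorem move_aux {X : Type*} {d : X → X → ℝ} (hd : IsPartialMetric d) {a b b' : ℕ → X} {L : ℝ}
    (h : Tendsto (fun n => d (a n) (b n)) atTop (𝓝 L))
    (h1 : Tendsto (fun n => d (b n) (b' n) - d (b n) (b n)) atTop (𝓝 0))
    (h2 : Tendsto (fun n => d (b n) (b' n) - d (b' n) (b' n)) atTop (𝓝 0)) :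
    Tendsto (fun n => d (a n) (b' n)) atTop (𝓝 L) := by
  obtain ⟨h0, hsym, hmax, htri, -⟩ := hd
  have e1 := h.sub h2
  have e2 := h.add h1
  simp only [sub_zero, add_zero] at e1 e2
  refine tendsto_of_tendsto_of_tendsto_of_le_of_le e1 e2 (fun n => ?_) (fun n => ?_)
  · have := htri (a n) (b' n) (b n)
    have := hsym (b' n) (b n)
    dsimp only
    linarith
  · have := htri (a n) (b n) (b' n)
    dsimp only
    linarith

theorem M_nonneg {X : Type*} {d : X → X → ℝ} (hd : IsPartialMetric d) (T : X → X) (x y : X) :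
    0 ≤ Mfun d T x y :=
  le_trans (hd.1 x y) (le_trans (le_max_left _ _) (le_max_left _ _))

theorem M_step {X : Type*} {d : X → X → ℝ} (hd : IsPartialMetric d) (T : X → X) (x : X) :
    Mfun d T x (T x) = max (d x (T x)) (d (T x) (T (T x))) := by
  obtain ⟨h0, hsym, hmax, htri, -⟩ := hd
  unfold Mfun
  have := htri x (T x) (T (T x))
  rw [← max_assoc, max_self]
  apply max_eq_left
  have h1 := le_max_left (d x (T x)) (d (T x) (T (T x)))
  have h2 := le_max_right (d x (T x)) (d (T x) (T (T x)))
  linarith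

theorem step_le {X : Type*} {d : X → X → ℝ}
    (hd : IsPartialMetric d) {φ : ℝ → ℝ} (hφ : IsLimitNormal φ) {T : X → X}
    (hT : ∀ x y : X, d (T x) (T y) ≤
      max (φ (Mfun d T x y)) ((d x x + d y y) / 2)) (x : X) :
    d (T x) (T (T x)) ≤ d x (T x) ∧
    d (T x) (T (T x)) ≤ max (φ (d x (T x))) ((d x x + d (T x) (T x)) / 2) := by
  have h := hT x (T x)
  rw [M_step hd] at h
  have hm := hd.2.2.1 x (T x)
  have h1 := le_trans (le_max_left _ _) hm
  have h2 := le_trans (le_max_right _ _) hm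
  have key : d (T x) (T (T x)) ≤ d x (T x) := by
    by_contra! hc
    rw [max_eq_right hc.le] at h
    have := hφ.1.2.2 _ (lt_of_le_of_lt (hd.1 _ _) hc)
    rcases le_max_iff.1 h with h | h <;> linarith
  rw [max_eq_left key] at h
  exact ⟨key, h⟩

theorem orbit_aux {X : Type*} {d : X → X → ℝ}
    (hd : IsPartialMetric d) (hcomp : eComplete d)
    {φ : ℝ → ℝ} (hφ : IsLimitNormal φ) {T : X → X}
    (hT : ∀ x y : X, d (T x) (T y) ≤
      max (φ (Mfun d T x y)) ((d x x + d y y) / 2)) (x0 : X) :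
    ∃ z, d z (T z) = d z z ∧ d z z ≤ d (T x0) (T (T x0)) := by
  have hd' := hd
  obtain ⟨h0, hsym, hmax, htri, -⟩ := hd'
  have hl : ∀ x y, d x x ≤ d x y := fun x y => le_trans (le_max_left _ _) (hmax x y)
  have hr : ∀ x y, d y y ≤ d x y := fun x y => le_trans (le_max_right _ _) (hmax x y)
  obtain ⟨x, hx0, hx⟩ : ∃ x : ℕ → X, x 0 = x0 ∧ ∀ n, x (n+1) = T (x n) :=
    ⟨fun n => T^[n] x0, rfl, fun n => Function.iterate_succ_apply' T n x0⟩
  have hstep := fun n => step_le hd hφ hT (x n)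
  simp only [← hx] at hstep
  have hanti : Antitone (fun n => d (x n) (x (n+1))) := antitone_nat_of_succ_le fun n => (hstep n).1
  obtain ⟨s, hs⟩ : ∃ s, Tendsto (fun n => d (x n) (x (n+1))) atTop (𝓝 s) :=
    ⟨_, tendsto_atTop_ciInf hanti ⟨0, by rintro _ ⟨n, rfl⟩; exact h0 _ _⟩⟩
  have hs1 := (tendsto_add_atTop_iff_nat 1).2 hs
  have hs0 : 0 ≤ s := ge_of_tendsto' hs fun n => h0 _ _
  have hsle : ∀ n, s ≤ d (x n) (x (n+1)) := fun n => hanti.le_of_tendsto hs n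
  -- self distances converge to s
  have hrr : Tendsto (fun n => d (x n) (x n)) atTop (𝓝 s) := by
    rcases hs0.eq_or_lt with h | h
    · rw [← h] at hs ⊢
      exact squeeze_zero (fun n => h0 _ _) (fun n => hl _ _) hs
    · have hev := ev_aux hφ h (fun n => h0 _ _) hs hs1 (fun n => (hstep n).2)
      have hlow : Tendsto (fun n => 2 * s - d (x n) (x (n+1))) atTop (𝓝 s) := by
        have := (tendsto_const_nhds (x := 2 * s)).sub hs
        rwa [show 2 * s - s = s by ring] at this
      refine tendsto_of_tendsto_of_tendsto_of_le_of_le' hlow hs ?_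
        (Eventually.of_forall fun n => hl _ _)
      filter_upwards [hev] with n hn
      have := hsle (n+1)
      have := hr (x n) (x (n+1))
      linarith
  have hrr1 := (tendsto_add_atTop_iff_nat 1).2 hrr
  have g1 : Tendsto (fun n => d (x n) (x (n+1)) - d (x n) (x n)) atTop (𝓝 0) := by
    simpa using hs.sub hrr
  have g2 : Tendsto (fun n => d (x n) (x (n+1)) - d (x (n+1)) (x (n+1))) atTop (𝓝 0) := by
    simpa using hs.sub hrr1
  have hC : ∀ η : ℝ, 0 < η → ∃ p : ℕ, ∀ m n : ℕ, p ≤ m → m ≤ n → d (x m) (x n) < s + η := by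
    intro η hη
    by_contra! hcon
    obtain ⟨N, hN⟩ := eventually_atTop.1 (hrr.eventually (gt_mem_nhds (show s < s + η by linarith)))
    have : ∀ p : ℕ, ∃ m n : ℕ, p ≤ m ∧ p ≤ n ∧ d (x m) (x n) < s + η ∧
        s + η ≤ d (x m) (x (n+1)) := by
      intro p
      obtain ⟨m, n, hm, hmn, hge⟩ := hcon (max p N)
      by_contra! hc
      have hpm := le_trans (le_max_left _ _) hm
      have : ∀ k, m ≤ k → d (x m) (x k) < s + η := by
        intro k hk
        induction k, hk using Nat.le_induction with
        | base => exact hN m (le_trans (le_max_right _ _) hm)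
        | succ k hk ih => exact hc m k hpm (hpm.trans hk) ih
      linarith [this n hmn]
    choose m n hm hn hlt hge using this
    have tm : Tendsto m atTop atTop := tendsto_atTop_mono hm tendsto_id
    have tn : Tendsto n atTop atTop := tendsto_atTop_mono hn tendsto_id
    have tn1 : Tendsto (fun p => n p + 1) atTop atTop := (tendsto_add_atTop_nat 1).comp tn
    have A1 : Tendsto (fun p => d (x (m p)) (x (n p + 1))) atTop (𝓝 (s + η)) := by
      have e := (tendsto_const_nhds (x := s + η)).add (g1.comp tn)
      rw [add_zero] at e
      refine tendsto_of_tendsto_of_tendsto_of_le_of_le tendsto_const_nhds e hge (fun p => ?_)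
      have := htri (x (m p)) (x (n p)) (x (n p + 1))
      have := hlt p
      simp only [Function.comp]
      linarith
    have A2 : Tendsto (fun p => d (x (m p)) (x (n p + 1 + 1))) atTop (𝓝 (s + η)) :=
      move_aux hd A1 (g1.comp tn1) (g2.comp tn1)
    have A3 : Tendsto (fun p => d (x (m p + 1)) (x (n p + 1))) atTop (𝓝 (s + η)) := by
      have := move_aux hd (a := fun p => x (n p + 1)) (b := fun p => x (m p))
        (b' := fun p => x (m p + 1)) (L := s + η)
        (by simpa only [hsym] using A1.congr (fun p => hsym _ _)) (g1.comp tm) (g2.comp tm)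
      exact this.congr (fun p => hsym _ _)
    have A4 : Tendsto (fun p => d (x (m p + 1)) (x (n p + 1 + 1))) atTop (𝓝 (s + η)) :=
      move_aux hd A3 (g1.comp tn1) (g2.comp tn1)
    have AM : Tendsto (fun p => Mfun d T (x (m p)) (x (n p + 1))) atTop (𝓝 (s + η)) := by
      unfold Mfun
      simp only [← hx]
      have := (A1.max ((hs.comp tm).max (hs.comp tn1))).max ((A2.add A3).div_const 2)
      rw [max_self, max_eq_left (show s ≤ s + η by linarith),
        show (s + η + (s + η)) / 2 = s + η by ring, max_self] at this
      exact this
    have hev := ev_aux hφ (show 0 < s + η by linarith) (fun p => M_nonneg hd T _ _) AM A4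
      (fun p => by
        have := hT (x (m p)) (x (n p + 1))
        simpa only [← hx] using this)
    have := le_of_tendsto_of_tendsto A4 (((hrr.comp tm).add (hrr.comp tn1)).div_const 2) hev
    linarith
  obtain ⟨z, hz⟩ := hcomp x (by
    intro α hα
    obtain ⟨p, hp⟩ := hC (α/4) (by linarith)
    obtain ⟨N, hN⟩ := eventually_atTop.1
      (hrr.eventually (lt_mem_nhds (show s - α/4 < s by linarith)))
    refine ⟨max p N, fun m n hm hn => ?_⟩
    have q1 := hN m (le_trans (le_max_right _ _) hm)
    have q2 := hN n (le_trans (le_max_right _ _) hn)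
    have q3 : d (x m) (x n) < s + α/4 := by
      rcases le_total m n with h | h
      · exact hp m n (le_trans (le_max_left _ _) hm) h
      · rw [hsym]; exact hp n m (le_trans (le_max_left _ _) hn) h
    unfold assocE
    linarith)
  have f1 : Tendsto (fun n => d (x n) z - d (x n) (x n)) atTop (𝓝 0) :=
    squeeze_zero (fun n => sub_nonneg.2 (hl _ _))
      (fun n => by unfold assocE; linarith [hr (x n) z]) hz
  have f2 : Tendsto (fun n => d (x n) z - d z z) atTop (𝓝 0) :=
    squeeze_zero (fun n => sub_nonneg.2 (hr _ _))
      (fun n => by unfold assocE; linarith [hl (x n) z]) hz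
  have f3 : Tendsto (fun n => d (x n) z) atTop (𝓝 s) := by
    simpa using f1.add hrr
  have hzz : d z z = s := by
    have : Tendsto (fun n => d (x n) z) atTop (𝓝 (d z z)) := by
      simpa using f2.add_const (d z z)
    exact tendsto_nhds_unique this f3
  refine ⟨z, ?_, ?_⟩
  · by_contra hne
    have hD : d z z < d z (T z) := lt_of_le_of_ne (hl _ _) (Ne.symm hne)
    have B1 : Tendsto (fun n => d (x n) (T z)) atTop (𝓝 (d z (T z))) := by
      have := move_aux hd (a := fun _ => T z) (b := fun _ => z) (b' := x) (L := d (T z) z)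
        tendsto_const_nhds (f2.congr (fun n => by rw [hsym (x n) z]))
        (f1.congr (fun n => by rw [hsym (x n) z]))
      rw [hsym z (T z)]
      exact this.congr (fun p => hsym _ _)
    have B2 := (tendsto_add_atTop_iff_nat 1).2 B1
    have f31 := (tendsto_add_atTop_iff_nat 1).2 f3
    have BM : Tendsto (fun n => Mfun d T (x n) z) atTop (𝓝 (d z (T z))) := by
      unfold Mfun
      simp only [← hx]
      have := (f3.max (hs.max (tendsto_const_nhds (x := d z (T z))))).max
        ((B1.add f31).div_const 2)
      rw [hzz] at hD
      rw [max_eq_right hD.le, max_eq_right hD.le,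
        max_eq_left (show (d z (T z) + s) / 2 ≤ d z (T z) by linarith)] at this
      exact this
    have hev := ev_aux hφ (lt_of_le_of_lt (h0 _ _) hD) (fun p => M_nonneg hd T _ _) BM B2
      (fun p => by
        have := hT (x p) z
        simpa only [← hx] using this)
    have := le_of_tendsto_of_tendsto B2 ((hrr.add_const (d z z)).div_const 2) hev
    linarith
  · rw [hzz]
    have := hsle 1
    rw [hx 1, hx 0, hx0] at this
    exact this

/-- almost-minimizing `d`-fixed points with small self-distance drop. -/
theorem dFixed_approx_min {X : Type*} [Nonempty X] (d : X → X → ℝ)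
    (hd : IsPartialMetric d) (hcomp : eComplete d)
    (φ : ℝ → ℝ) (hφ : IsLimitNormal φ) (hψ : SemiCoercive (fun t => t - φ t))
    (T : X → X)
    (hT : ∀ x y : X, d (T x) (T y) ≤
      max (φ (Mfun d T x y)) ((d x x + d y y) / 2))
    (θ : ℝ) (hθ : θ = sInf {r : ℝ | ∃ z : X, d z (T z) = d z z ∧ r = d z z}) :
    ∀ ε : ℝ, 0 < ε → ∃ z : X,
      d z (T z) = d z z ∧ d z z < θ + ε ∧ d z z - d (T z) (T z) < 2 * ε := by
  intro ε hε
  set S := {r : ℝ | ∃ z : X, d z (T z) = d z z ∧ r = d z z} with hS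
  have hbdd : BddBelow S := ⟨0, by rintro _ ⟨z, -, rfl⟩; exact hd.1 _ _⟩
  have hne : S.Nonempty := by
    obtain ⟨z, hz, -⟩ := orbit_aux hd hcomp hφ hT (Classical.arbitrary X)
    exact ⟨_, z, hz, rfl⟩
  have hθ0 : 0 ≤ θ := by
    rw [hθ]
    exact le_csInf hne (by rintro _ ⟨z, -, rfl⟩; exact hd.1 _ _)
  have hlow : ∀ z, d z (T z) = d z z → θ ≤ d z z := fun z hz => by
    rw [hθ]; exact csInf_le hbdd ⟨z, hz, rfl⟩
  have hex : ∀ η : ℝ, 0 < η → ∃ z, d z (T z) = d z z ∧ d z z < θ + η := by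
    intro η hη
    obtain ⟨_, ⟨z, hz, rfl⟩, h⟩ := exists_lt_of_csInf_lt hne (show sInf S < θ + η by linarith)
    exact ⟨z, hz, h⟩
  rcases hθ0.eq_or_lt with h | h
  · obtain ⟨z, hz, h1⟩ := hex ε hε
    exact ⟨z, hz, h1, by linarith [hd.1 (T z) (T z)]⟩
  · obtain ⟨δ, hδ, c, hc, hφc⟩ := ln_aux hφ h
    obtain ⟨z, hz, h1⟩ := hex (min ε δ) (lt_min hε hδ)
    have m1 := min_le_left ε δ
    have m2 := min_le_right ε δ
    refine ⟨z, hz, by linarith, ?_⟩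
    obtain ⟨w, hw, hw1⟩ := orbit_aux hd hcomp hφ hT z
    have h2 := (step_le hd hφ hT z).2
    have h3 := hlow w hw
    have h4 := hlow z hz
    rw [hz] at h2
    rcases le_max_iff.1 h2 with h5 | h5
    · linarith [hφc (d z z) (hd.1 _ _) (by linarith) (by linarith)]
    · linarith
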